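/- Let Γ be a countable discrete group, N a finite normal subgroup, π : Γ → Γ/N the quotient homomorphism, and μ a finitely supported, generating, transient probability measure on Γ with Green function G and Martin kernel K(x,y) = G(yx⁻¹)/G(y). Let μ̄ be the pushforward of μ to Γ/N, with Green function Ḡ and Martin kernel K̄(c,d) = Ḡ(d·c⁻¹)/Ḡ(d). Then the two Martin kernels asymptotically agree: for every x ∈ Γ, the function y ↦ K(x,y) − K̄(π(x), π(y)) vanishes at infinity, i.e. tends to 0 along the cofinite filter on Γ. (This identifies the Martin boundary of Γ with that of Γ/N.) -/

import Mathlib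

/-- Convolution of two (signed) measures on a discrete group:
`(μ ∗ ν)(x) = ∑_y μ(y) ν(y⁻¹ x)`. -/
noncomputable def conv {G : Type*} [Group G] (μ ν : G → ℝ) : G → ℝ :=
  fun x => ∑' y, μ y * ν (y⁻¹ * x)

/-- Convolution powers: `μ^{*0} = δ_e`, `μ^{*(n+1)} = μ^{*n} ∗ μ`. -/
noncomputable def convPow {G : Type*} [Group G] (μ : G → ℝ) : ℕ → G → ℝ
  | 0 => Set.indicator ({1} : Set G) (fun _ => (1 : ℝ))
  | n + 1 => conv (convPow μ n) μ

/-- A measure `μ` is generating if every point gets positive mass from some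
convolution power `μ^{*n}`, `n ≥ 1`. -/
def IsGenerating {G : Type*} [Group G] (μ : G → ℝ) : Prop :=
  ∀ x : G, ∃ n : ℕ, 1 ≤ n ∧ 0 < convPow μ n x

/-- A measure `μ` is transient if its Green function `∑_n μ^{*n}(x)` is finite
(i.e. the series is summable) at every point. -/
def IsTransient {G : Type*} [Group G] (μ : G → ℝ) : Prop :=
  ∀ x : G, Summable fun n => convPow μ n x

/-- The Green function `G(x) = ∑_{n ≥ 0} μ^{*n}(x)`. -/
noncomputable def greenFn {G : Type*} [Group G] (μ : G → ℝ) : G → ℝ :=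
  fun x => ∑' n, convPow μ n x

/-- The Martin kernel `K(x, y) = G(y x⁻¹) / G(y)`. -/
noncomputable def martinKernel {G : Type*} [Group G] (μ : G → ℝ) (x y : G) : ℝ :=
  greenFn μ (y * x⁻¹) / greenFn μ y

/-- The pushforward of a measure `μ` on `Γ` to the quotient group `Γ/N`:
`μ̄(c) = ∑_{x : π(x) = c} μ(x)`. -/
noncomputable def pushforward {Γ : Type*} [Group Γ] (N : Subgroup Γ) [N.Normal]
    (μ : Γ → ℝ) : Γ ⧸ N → ℝ :=
  fun c => ∑' x : {x : Γ // (QuotientGroup.mk x : Γ ⧸ N) = c}, μ x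

section Helpers
open Filter Topology

variable {Γ : Type*} [Group Γ]

lemma mk_convPow_nonneg (μ : Γ → ℝ) (h0 : ∀ x, 0 ≤ μ x) (n : ℕ) (x : Γ) : 0 ≤ convPow μ n x := by
  induction n generalizing x with
  | zero => exact Set.indicator_nonneg (fun _ _ => zero_le_one) x
  | succ n ih => exact tsum_nonneg fun y => mul_nonneg (ih y) (h0 _)

lemma mk_convPow_succ (μ : Γ → ℝ) (S : Finset Γ) (hS : ∀ x, x ∉ S → μ x = 0) (n : ℕ) (z : Γ) :
    convPow μ (n+1) z = ∑ s ∈ S, convPow μ n (z * s⁻¹) * μ s := by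
  have h1 : convPow μ (n+1) z = ∑' y, convPow μ n y * μ (y⁻¹ * z) := rfl
  rw [h1, ← ((Equiv.inv Γ).trans (Equiv.mulLeft z)).tsum_eq]
  rw [tsum_eq_sum (s := S)]
  · apply Finset.sum_congr rfl
    intro s _
    simp
  · intro s hs
    simp [hS s hs]

def MkSH (S : Finset Γ) (μ : Γ → ℝ) (h : Γ → ℝ) : Prop :=
  (∀ x, 0 ≤ h x) ∧ ∀ x, ∑ s ∈ S, μ s * h (s * x) ≤ h x

lemma mk_harnack (μ : Γ → ℝ) (S : Finset Γ) (hS : ∀ x, x ∉ S → μ x = 0) (h0 : ∀ x, 0 ≤ μ x)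
    (n : ℕ) (x : Γ) (hx : 0 < convPow μ n x) :
    ∃ c : ℝ, 0 < c ∧ ∀ h, MkSH S μ h → ∀ y, c * h (x * y) ≤ h y := by
  induction n generalizing x with
  | zero =>
    have : x = 1 := by
      by_contra hne
      simp [convPow, hne] at hx
    subst this
    exact ⟨1, one_pos, fun h _ y => by simp⟩
  | succ n ih =>
    rw [mk_convPow_succ μ S hS] at hx
    obtain ⟨s, hs, hpos⟩ := Finset.exists_lt_of_sum_lt (s := S) (f := fun _ => (0:ℝ)) (by simpa using hx)
    have hn := mk_convPow_nonneg μ h0 n (x * s⁻¹)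
    have h1 : 0 < convPow μ n (x * s⁻¹) := lt_of_le_of_ne hn (by rintro h; rw [← h] at hpos; simp at hpos)
    have h2 : 0 < μ s := lt_of_le_of_ne (h0 s) (by rintro h; rw [← h] at hpos; simp at hpos)
    obtain ⟨c, hc, H⟩ := ih _ h1
    refine ⟨c * μ s, mul_pos hc h2, fun h hh y => ?_⟩
    have e1 := H h hh (s * y)
    have e2 : μ s * h (s * y) ≤ h y := by
      refine le_trans ?_ (hh.2 y)
      exact Finset.single_le_sum (f := fun s => μ s * h (s * y)) (fun i _ => mul_nonneg (h0 i) (hh.1 _)) hs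
    have e3 : x * s⁻¹ * (s * y) = x * y := by group
    rw [e3] at e1
    calc c * μ s * h (x * y) = μ s * (c * h (x*y)) := by ring
      _ ≤ μ s * h (s * y) := by gcongr
      _ ≤ _ := e2

lemma mk_harnack' (μ : Γ → ℝ) (S : Finset Γ) (hS : ∀ x, x ∉ S → μ x = 0) (h0 : ∀ x, 0 ≤ μ x)
    (hgen : IsGenerating μ) (x : Γ) :
    ∃ c : ℝ, 0 < c ∧ ∀ h, MkSH S μ h → ∀ y, c * h (x * y) ≤ h y := by
  obtain ⟨n, _, hn⟩ := hgen x
  exact mk_harnack μ S hS h0 n x hn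

/-- normalized positive harmonic functions -/
def mkP (S : Finset Γ) (μ : Γ → ℝ) : Set (Γ → ℝ) :=
  {h | (∀ x, 0 ≤ h x) ∧ h 1 = 1 ∧ ∀ x, ∑ s ∈ S, μ s * h (s * x) = h x}

lemma mkP_sh {S : Finset Γ} {μ h : Γ → ℝ} (hh : h ∈ mkP S μ) : MkSH S μ h :=
  ⟨hh.1, fun x => (hh.2.2 x).le⟩

lemma mkP_pos (μ : Γ → ℝ) (S : Finset Γ) (hS : ∀ x, x ∉ S → μ x = 0) (h0 : ∀ x, 0 ≤ μ x)
    (hgen : IsGenerating μ) {h : Γ → ℝ} (hh : h ∈ mkP S μ) (x : Γ) : 0 < h x := by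
  obtain ⟨c, hc, H⟩ := mk_harnack' μ S hS h0 hgen x⁻¹
  have := H h (mkP_sh hh) x
  rw [inv_mul_cancel, hh.2.1] at this
  linarith

lemma mkP_compact (μ : Γ → ℝ) (S : Finset Γ) (hS : ∀ x, x ∉ S → μ x = 0) (h0 : ∀ x, 0 ≤ μ x)
    (hgen : IsGenerating μ) : IsCompact (mkP S μ) := by
  choose c hc H using mk_harnack' μ S hS h0 hgen
  have hK : IsCompact (Set.pi Set.univ fun x : Γ => Set.Icc (0:ℝ) (1 / c x)) :=
    isCompact_univ_pi fun x => isCompact_Icc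
  refine hK.of_isClosed_subset ?_ ?_
  · have : mkP S μ = (⋂ x, {h : Γ → ℝ | 0 ≤ h x}) ∩ ({h | h 1 = 1} ∩
        ⋂ x, {h : Γ → ℝ | ∑ s ∈ S, μ s * h (s * x) = h x}) := by
      ext h; simp [mkP]
    rw [this]
    refine (isClosed_iInter fun x => isClosed_le continuous_const (continuous_apply x)).inter
      ((isClosed_eq (continuous_apply 1) continuous_const).inter
        (isClosed_iInter fun x => isClosed_eq ?_ (continuous_apply x)))
    fun_prop
  · intro h hh x _
    refine ⟨hh.1 x, ?_⟩
    have := H x h (mkP_sh hh) 1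
    rw [mul_one, hh.2.1] at this
    rw [le_div_iff₀ (hc x)]; linarith

lemma mkP_translate (μ : Γ → ℝ) (S : Finset Γ) {h : Γ → ℝ} (hh : h ∈ mkP S μ) (x : Γ)
    (hx : 0 < h x) : (fun y => h (y * x) / h x) ∈ mkP S μ := by
  refine ⟨fun y => div_nonneg (hh.1 _) hx.le, by simp [hx.ne'], fun y => ?_⟩
  show _ = h (y * x) / h x
  rw [← hh.2.2 (y * x), Finset.sum_div]
  simp only [mul_assoc, mul_div_assoc]

lemma mkP_le_one (N : Subgroup Γ) [N.Normal] [Finite N]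
    (μ : Γ → ℝ) (S : Finset Γ) (hS : ∀ x, x ∉ S → μ x = 0) (h0 : ∀ x, 0 ≤ μ x)
    (hgen : IsGenerating μ) {h : Γ → ℝ} (hh : h ∈ mkP S μ) (n : Γ) (hn : n ∈ N) : h n ≤ 1 := by
  have key : ∀ n : N, ∃ g ∈ mkP S μ, ∀ f ∈ mkP S μ, f n ≤ g n := fun n => by
    obtain ⟨g, hg, hm⟩ := (mkP_compact μ S hS h0 hgen).exists_isMaxOn ⟨h, hh⟩
      (continuous_apply (n : Γ)).continuousOn
    exact ⟨g, hg, fun f hf => hm hf⟩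
  choose g hg hmax using key
  obtain ⟨m, hm⟩ := Finite.exists_max (fun n : N => g n n)
  set c := g m m with hc
  have hle : ∀ f ∈ mkP S μ, ∀ k ∈ N, f k ≤ c := fun f hf k hk =>
    (hmax ⟨k, hk⟩ f hf).trans (hm ⟨k, hk⟩)
  have hpos := mkP_pos μ S hS h0 hgen (hg m)
  have h1 : ∀ x, g m (x * m) ≤ c * g m x := fun x => by
    have := hle _ (mkP_translate μ S (hg m) x (hpos x)) (x * m * x⁻¹)
      (Subgroup.Normal.conj_mem inferInstance _ m.2 x)
    simp only [inv_mul_cancel_right] at this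
    rwa [div_le_iff₀ (hpos x)] at this
  have hu : MkSH S μ (fun x => c * g m x - g m (x * m)) := by
    refine ⟨fun x => sub_nonneg.2 (h1 x), fun x => le_of_eq ?_⟩
    show _ = c * g m x - g m (x * m)
    rw [← (hg m).2.2 x, ← (hg m).2.2 (x * m), Finset.mul_sum, ← Finset.sum_sub_distrib]
    refine Finset.sum_congr rfl fun s _ => ?_
    rw [← mul_assoc s x]; ring
  have h2 : ∀ x, g m (x * m) = c * g m x := fun x => by
    obtain ⟨d, hd, H⟩ := mk_harnack' μ S hS h0 hgen x
    have := H _ hu 1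
    simp only [mul_one, one_mul, (hg m).2.1] at this
    have h3 := hu.1 x
    simp only at h3
    have h4 : d * (c * g m x - g m (x * m)) ≤ 0 := by linarith
    have h5 : c * g m x - g m (x * m) ≤ 0 := by
      by_contra hcon
      push Not at hcon
      have := mul_pos hd hcon
      linarith
    linarith
  have h3 : ∀ k : ℕ, g m ((m : Γ) ^ k) = c ^ k := fun k => by
    induction k with
    | zero => simp [(hg m).2.1]
    | succ k ih => rw [pow_succ, h2, ih, pow_succ]; ring
  have h4 := h3 (orderOf m)
  have h5 : (m : Γ) ^ orderOf m = 1 := by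
    have := pow_orderOf_eq_one m
    exact_mod_cast congrArg (Subtype.val) this
  rw [h5, (hg m).2.1] at h4
  have h6 : c = 1 := (pow_eq_one_iff_of_nonneg (hpos _).le (orderOf_pos m).ne').1 h4.symm
  exact h6 ▸ hle h hh n hn

lemma mkP_inv (N : Subgroup Γ) [N.Normal] [Finite N]
    (μ : Γ → ℝ) (S : Finset Γ) (hS : ∀ x, x ∉ S → μ x = 0) (h0 : ∀ x, 0 ≤ μ x)
    (hgen : IsGenerating μ) {h : Γ → ℝ} (hh : h ∈ mkP S μ) (n : Γ) (hn : n ∈ N) (x : Γ) :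
    h (x * n) = h x := by
  have hpos := mkP_pos μ S hS h0 hgen hh
  have key : ∀ n ∈ N, ∀ x, h (x * n) ≤ h x := fun n hn x => by
    have := mkP_le_one N μ S hS h0 hgen (mkP_translate μ S hh x (hpos x)) (x * n * x⁻¹)
      (Subgroup.Normal.conj_mem inferInstance _ hn x)
    simp only [inv_mul_cancel_right] at this
    rwa [div_le_one (hpos x)] at this
  refine le_antisymm (key n hn x) ?_
  simpa using key n⁻¹ (N.inv_mem hn) (x * n)

lemma mk_green_eq (μ : Γ → ℝ) (S : Finset Γ) (hS : ∀ x, x ∉ S → μ x = 0)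
    (htrans : IsTransient μ) (z : Γ) :
    greenFn μ z = Set.indicator ({1} : Set Γ) (fun _ => (1 : ℝ)) z +
      ∑ s ∈ S, μ s * greenFn μ (z * s⁻¹) := by
  unfold greenFn
  rw [(htrans z).tsum_eq_zero_add]
  congr 1
  simp_rw [mk_convPow_succ μ S hS]
  rw [Summable.tsum_finsetSum (fun s _ => (htrans _).mul_right _)]
  refine Finset.sum_congr rfl fun s _ => ?_
  rw [tsum_mul_right, mul_comm]

lemma mk_green_pos (μ : Γ → ℝ) (h0 : ∀ x, 0 ≤ μ x)
    (hgen : IsGenerating μ) (htrans : IsTransient μ) (z : Γ) : 0 < greenFn μ z := by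
  obtain ⟨n, _, hn⟩ := hgen z
  exact (htrans z).tsum_pos (fun k => mk_convPow_nonneg μ h0 k z) n hn

lemma mk_martin_eq (μ : Γ → ℝ) (S : Finset Γ) (hS : ∀ x, x ∉ S → μ x = 0)
    (htrans : IsTransient μ) (x y : Γ) :
    martinKernel μ x y = Set.indicator ({1} : Set Γ) (fun _ => (1 : ℝ)) (y * x⁻¹) / greenFn μ y +
      ∑ s ∈ S, μ s * martinKernel μ (s * x) y := by
  unfold martinKernel
  rw [mk_green_eq μ S hS htrans (y * x⁻¹), add_div, Finset.sum_div]
  simp only [mul_inv_rev, mul_assoc, mul_div_assoc]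

lemma mk_limit (μ : Γ → ℝ) (S : Finset Γ) (hS : ∀ x, x ∉ S → μ x = 0) (h0 : ∀ x, 0 ≤ μ x)
    (hgen : IsGenerating μ) (htrans : IsTransient μ) (U : Ultrafilter Γ)
    (hU : (U : Filter Γ) ≤ cofinite) :
    ∃ h ∈ mkP S μ, ∀ x, Tendsto (fun y => martinKernel μ x y) U (𝓝 (h x)) := by
  have hG := mk_green_pos μ h0 hgen htrans
  have hK0 : ∀ x y, 0 ≤ martinKernel μ x y := fun x y => div_nonneg (hG _).le (hG _).le
  have hK1 : ∀ y, martinKernel μ 1 y = 1 := fun y => by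
    simp [martinKernel, (hG y).ne']
  have hsh : ∀ y, MkSH S μ (fun x => martinKernel μ x y) := fun y => by
    refine ⟨fun x => hK0 x y, fun x => ?_⟩
    show _ ≤ martinKernel μ x y
    rw [mk_martin_eq μ S hS htrans x y]
    refine le_add_of_nonneg_left (div_nonneg ?_ (hG _).le)
    exact Set.indicator_nonneg (fun _ _ => zero_le_one) _
  have hlim : ∀ x, ∃ l : ℝ, Tendsto (fun y => martinKernel μ x y) U (𝓝 l) := fun x => by
    obtain ⟨c, hc, H⟩ := mk_harnack' μ S hS h0 hgen x
    have hb : ∀ y, martinKernel μ x y ∈ Set.Icc (0:ℝ) (1 / c) := fun y => by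
      refine ⟨hK0 x y, ?_⟩
      have := H _ (hsh y) 1
      simp only [mul_one, hK1] at this
      rw [le_div_iff₀ hc]; linarith
    obtain ⟨l, _, hl⟩ := (isCompact_Icc (a := (0:ℝ)) (b := 1 / c)).ultrafilter_le_nhds
      (U.map (fun y => martinKernel μ x y)) (by
        rw [le_principal_iff]
        exact Filter.mem_map.2 (Filter.univ_mem' hb))
    exact ⟨l, hl⟩
  choose h hh using hlim
  refine ⟨h, ⟨fun x => ge_of_tendsto' (hh x) (hK0 x), ?_, fun x => ?_⟩, hh⟩
  · refine tendsto_nhds_unique (hh 1) ?_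
    simp_rw [hK1]
    exact tendsto_const_nhds
  · have t1 : Tendsto (fun y => ∑ s ∈ S, μ s * martinKernel μ (s * x) y) U
        (𝓝 (∑ s ∈ S, μ s * h (s * x))) :=
      tendsto_finsetSum _ fun s _ => (hh (s * x)).const_mul _
    refine tendsto_nhds_unique t1 ((hh x).congr' ?_)
    have : ∀ᶠ y in (U : Filter Γ), y ≠ x := hU (by simp [Set.finite_singleton])
    filter_upwards [this] with y hy
    rw [mk_martin_eq μ S hS htrans x y]
    have : y * x⁻¹ ≠ 1 := fun h => hy (mul_inv_eq_one.1 h)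
    simp [this]

open scoped Classical in
lemma mk_push (N : Subgroup Γ) [N.Normal] (μ : Γ → ℝ) (S : Finset Γ)
    (hS : ∀ x, x ∉ S → μ x = 0) (c : Γ ⧸ N) :
    pushforward N μ c = ∑ s ∈ S, if (QuotientGroup.mk s : Γ ⧸ N) = c then μ s else 0 := by
  have h1 : pushforward N μ c = ∑' x : ({x : Γ | (QuotientGroup.mk x : Γ ⧸ N) = c} : Set Γ), μ x := rfl
  rw [h1, tsum_subtype, tsum_eq_sum (s := S)]
  · refine Finset.sum_congr rfl fun s _ => ?_
    simp [Set.indicator]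
  · intro x hx
    simp [Set.indicator, hS x hx]

lemma mk_convPow_push (N : Subgroup Γ) [N.Normal] [Fintype N] (μ : Γ → ℝ) (S : Finset Γ)
    (hS : ∀ x, x ∉ S → μ x = 0) (k : ℕ) (z : Γ) :
    convPow (pushforward N μ) k (QuotientGroup.mk z) = ∑ n : N, convPow μ k (z * n) := by
  classical
  induction k generalizing z with
  | zero =>
    by_cases hz : z ∈ N
    · have : (QuotientGroup.mk z : Γ ⧸ N) = 1 := (QuotientGroup.eq_one_iff z).2 hz
      rw [this]
      rw [Finset.sum_eq_single (⟨z⁻¹, N.inv_mem hz⟩ : N)]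
      · simp [convPow]
      · intro b _ hb
        have : z * (b : Γ) ≠ 1 := fun h => hb (Subtype.ext (by simpa using (mul_eq_one_iff_inv_eq.1 h).symm))
        simp [convPow, this]
      · simp
    · have : (QuotientGroup.mk z : Γ ⧸ N) ≠ 1 := fun h => hz ((QuotientGroup.eq_one_iff z).1 h)
      simp only [convPow]
      rw [Set.indicator_of_notMem (by simpa using this), Finset.sum_eq_zero]
      intro n _
      apply Set.indicator_of_notMem
      simp only [Set.mem_singleton_iff]
      intro h
      exact hz (by rw [mul_eq_one_iff_eq_inv.1 h]; exact N.inv_mem n.2)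
  | succ k ih =>
    rw [mk_convPow_succ (pushforward N μ) (S.image (QuotientGroup.mk : Γ → Γ ⧸ N))]
    · simp_rw [mk_push N μ S hS, Finset.mul_sum]
      rw [Finset.sum_comm]
      have e1 : ∀ s ∈ S, ∑ c ∈ S.image (QuotientGroup.mk : Γ → Γ ⧸ N),
          convPow (pushforward N μ) k (QuotientGroup.mk z * c⁻¹) *
            (if (QuotientGroup.mk s : Γ ⧸ N) = c then μ s else 0) =
          ∑ n : N, convPow μ k (z * n * s⁻¹) * μ s := fun s hs => by
        rw [Finset.sum_eq_single (QuotientGroup.mk s : Γ ⧸ N)]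
        · have : (QuotientGroup.mk z * (QuotientGroup.mk s)⁻¹ : Γ ⧸ N) = QuotientGroup.mk (z * s⁻¹) := rfl
          rw [if_pos rfl, this, ih, Finset.sum_mul]
          rw [← (MulAut.conjNormal s : MulAut N).toEquiv.sum_comp]
          refine Finset.sum_congr rfl fun n _ => ?_
          congr 2
          simp [mul_assoc]
        · intro b _ hb
          simp [hb.symm]
        · intro h
          exact absurd (Finset.mem_image_of_mem _ hs) h
      rw [Finset.sum_congr rfl e1, Finset.sum_comm]
      simp_rw [mk_convPow_succ μ S hS]
    · intro c hc
      rw [mk_push N μ S hS]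
      refine Finset.sum_eq_zero fun s hs => if_neg ?_
      rintro rfl
      exact hc (Finset.mem_image_of_mem _ hs)

lemma mk_green_push (N : Subgroup Γ) [N.Normal] [Fintype N] (μ : Γ → ℝ) (S : Finset Γ)
    (hS : ∀ x, x ∉ S → μ x = 0) (htrans : IsTransient μ) (z : Γ) :
    greenFn (pushforward N μ) (QuotientGroup.mk z) = ∑ n : N, greenFn μ (z * n) := by
  unfold greenFn
  simp_rw [mk_convPow_push N μ S hS]
  rw [Summable.tsum_finsetSum (fun s _ => htrans _)]

lemma mk_martin_push (N : Subgroup Γ) [N.Normal] [Fintype N] (μ : Γ → ℝ) (S : Finset Γ)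
    (hS : ∀ x, x ∉ S → μ x = 0) (htrans : IsTransient μ) (x y : Γ) (hG : greenFn μ y ≠ 0) :
    martinKernel (pushforward N μ) (QuotientGroup.mk x) (QuotientGroup.mk y) =
      (∑ n : N, martinKernel μ (n⁻¹ * x) y) / (∑ n : N, martinKernel μ n⁻¹ y) := by
  have e : (QuotientGroup.mk y * (QuotientGroup.mk x)⁻¹ : Γ ⧸ N) = QuotientGroup.mk (y * x⁻¹) := rfl
  unfold martinKernel
  rw [e, mk_green_push N μ S hS htrans, mk_green_push N μ S hS htrans, ← Finset.sum_div,
    ← Finset.sum_div, div_div_div_cancel_right₀ hG]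
  congr 1
  · simp [mul_assoc]
  · simp

end Helpers

/-- Identification of the Martin boundary of `Γ` with that of `Γ/N`: for a
finitely supported, generating, transient probability measure `μ` on a
countable group `Γ` with finite normal subgroup `N`, the Martin kernel of `μ`
asymptotically agrees with the Martin kernel of the pushforward measure `μ̄`
on `Γ/N`: for every `x`, `y ↦ K(x, y) - K̄(π(x), π(y))` vanishes at
infinity. -/
theorem martin_kernel_agrees_with_quotient
    {Γ : Type*} [Group Γ] [Countable Γ]
    (N : Subgroup Γ) [N.Normal] [Finite N]
    (μ : Γ → ℝ) (hμ0 : ∀ x, 0 ≤ μ x) (hμ1 : HasSum μ 1)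
    (hfin : (Function.support μ).Finite)
    (hgen : IsGenerating μ) (htrans : IsTransient μ) :
    ∀ x : Γ,
      Filter.Tendsto
        (fun y : Γ => martinKernel μ x y -
          martinKernel (pushforward N μ) (QuotientGroup.mk x) (QuotientGroup.mk y))
        Filter.cofinite (nhds 0) := by
  intro x
  haveI : Fintype N := Fintype.ofFinite N
  have hS : ∀ x, x ∉ hfin.toFinset → μ x = 0 := fun x hx => by simpa using hx
  rw [Filter.tendsto_iff_ultrafilter]
  intro U hU
  obtain ⟨h, hh, hlim⟩ := mk_limit μ hfin.toFinset hS hμ0 hgen htrans U hU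
  have hinv := mkP_inv N μ _ hS hμ0 hgen hh
  have hcard : (Fintype.card N : ℝ) ≠ 0 := by
    exact_mod_cast Fintype.card_ne_zero
  have hl : ∀ n : N, h ((n : Γ)⁻¹ * x) = h x := fun n => by
    have := hinv (x⁻¹ * (n : Γ)⁻¹ * x) (by
      simpa using Subgroup.Normal.conj_mem (inferInstance : N.Normal) _ (N.inv_mem n.2) x⁻¹) x
    simpa [mul_assoc] using this
  have hl1 : ∀ n : N, h ((n : Γ)⁻¹) = 1 := fun n => by
    have := hinv ((n : Γ)⁻¹) (N.inv_mem n.2) 1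
    rwa [one_mul, hh.2.1] at this
  have t1 : Filter.Tendsto (fun y => ∑ n : N, martinKernel μ ((n : Γ)⁻¹ * x) y) U
      (nhds (∑ n : N, h ((n : Γ)⁻¹ * x))) := tendsto_finsetSum _ fun n _ => hlim _
  have t2 : Filter.Tendsto (fun y => ∑ n : N, martinKernel μ ((n : Γ)⁻¹) y) U
      (nhds (∑ n : N, h ((n : Γ)⁻¹))) := tendsto_finsetSum _ fun n _ => hlim _
  simp only [hl, hl1, Finset.sum_const, Finset.card_univ, nsmul_eq_mul, mul_one] at t1 t2
  have t3 := (hlim x).sub (t1.div t2 hcard)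
  rw [mul_div_cancel_left₀ _ hcard, sub_self] at t3
  refine t3.congr fun y => ?_
  rw [mk_martin_push N μ _ hS htrans x y (mk_green_pos μ hμ0 hgen htrans y).ne']
  rfl
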